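/- Corollary 3.6 (cor: 3.4): V̄^⊗m is a completely reducible module over the duplex Hecke algebra 𝓗_m under Ξ; that is, V̄^⊗m is a direct sum of subspaces D each of which is nonzero, satisfies Ξ(h)D ⊆ D for all h ∈ 𝓗_m, and has no Ξ(𝓗_m)-stable subspace other than 0 and D. -/

import Mathlib

/-!
The module is semisimple because the image of `Ξ` is closed under transposition with respect to
an anisotropic form. Let `⟨u, w⟩ = ∑ f, u f * w f` be the symmetric bilinear form making the `M_f`
orthonormal. As `ℚ(q)` is formally real (`eq_zero_of_sum_sq_eq_zero`), no nonzero vector is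
isotropic, so every subspace is complemented by its orthogonal.

Each `Ψ(H_i)` is an involutive permutation of the basis plus a diagonal operator, hence symmetric
(`isSelfAdj_RopN`), and `Ξ(x_e^(l))` is the coordinate projection `projL` onto
`V^⊗l ⊗ η_{r+3/2}^⊗(m-l)`, again symmetric. Since `Ξ(x_σ^(l))` is a product of operators `Ψ(H_i)`
composed with `projL`, a subspace is `Ξ(𝓗_m)`-stable exactly when it is stable under these
symmetric operators (`stable_of_generators`), and this property passes to orthogonal complements.
The lattice of stable subspaces is thus complemented, i.e. the module is semisimple over the
image algebra, and Mathlib's decomposition of semisimple modules into simple ones applies.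
-/

noncomputable section

open scoped BigOperators

set_option maxHeartbeats 1000000
set_option synthInstance.maxHeartbeats 400000

/-- The field `ℚ(q)`. -/
abbrev Kq : Type := RatFunc ℚ

/-- The element `q`, transcendental over `ℚ`. -/
def qv : Kq := RatFunc.X

/-- Index set `𝕀(2r+4)`: the `j`-th element represents the half-integer `j - r - 3/2`. -/
abbrev Idx (r : ℕ) := Fin (2*r+4)

/-- The space `V̄`, with basis `η_j` indexed by `𝕀(2r+4)` (coordinate form). -/
abbrev Vb (r : ℕ) := Idx r → Kq

/-- The tensor power `V̄^⊗m` (coordinates with respect to the basis `M_f`). -/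
abbrev TP (r m : ℕ) := (Fin m → Idx r) → Kq

/-- Basis vector `M_f = η_{f 0} ⊗ ⋯ ⊗ η_{f (m-1)}`. -/
def Mf {r m : ℕ} (f : Fin m → Idx r) : TP r m := Pi.single f 1

/-- For a quantum-group index `a : Fin (2r+3)` (representing `i = a - r - 1 ∈ [-r-1, r+1]`),
the index of `η_{i - 1/2}`. -/
def loI {r : ℕ} (a : Fin (2*r+3)) : Idx r := ⟨a.1, by have := a.2; omega⟩

/-- The index of `η_{i + 1/2}`. -/
def hiI {r : ℕ} (a : Fin (2*r+3)) : Idx r := ⟨a.1+1, by have := a.2; omega⟩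

/-- The index of `η_{-r-3/2}`. -/
def botI (r : ℕ) : Idx r := ⟨0, by omega⟩

/-- The index of `η_{r+3/2}`. -/
def topI (r : ℕ) : Idx r := ⟨2*r+3, by omega⟩

/-- A linear endomorphism of `V̄` of the shape `v ↦ (j ↦ c j * v (t j))`. -/
def diagMove (r : ℕ) (c : Idx r → Kq) (t : Idx r → Idx r) : Module.End Kq (Vb r) where
  toFun v := fun j => c j * v (t j)
  map_add' u v := by funext j; simp [Pi.add_apply, mul_add]
  map_smul' s v := by
    funext j
    simp only [Pi.smul_apply, smul_eq_mul, RingHom.id_apply]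
    ring

/-- The operator `e_i` on `V̄`: `e_i η_{i+1/2} = η_{i-1/2}`, zero on other basis vectors. -/
def opE (r : ℕ) (a : Fin (2*r+3)) : Module.End Kq (Vb r) :=
  diagMove r (fun j => if j = loI a then 1 else 0) (fun j => if j = loI a then hiI a else j)

/-- The operator `f_i` on `V̄`: `f_i η_{i-1/2} = η_{i+1/2}`, zero on other basis vectors. -/
def opF (r : ℕ) (a : Fin (2*r+3)) : Module.End Kq (Vb r) :=
  diagMove r (fun j => if j = hiI a then 1 else 0) (fun j => if j = hiI a then loI a else j)

/-- The operator `κ_i` on `V̄`. -/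
def opK (r : ℕ) (a : Fin (2*r+3)) : Module.End Kq (Vb r) :=
  diagMove r (fun j => if j = loI a then qv else if j = hiI a then qv⁻¹ else 1) id

/-- The operator `κ_i⁻¹` on `V̄`. -/
def opKinv (r : ℕ) (a : Fin (2*r+3)) : Module.End Kq (Vb r) :=
  diagMove r (fun j => if j = loI a then qv⁻¹ else if j = hiI a then qv else 1) id

/-- A linear endomorphism of `V̄^⊗m` given by a "matrix" `c`. -/
def matOp (r m : ℕ) (c : (Fin m → Idx r) → (Fin m → Idx r) → Kq) : Module.End Kq (TP r m) where
  toFun v := fun g => ∑ f : Fin m → Idx r, c g f * v f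
  map_add' u v := by
    funext g
    simp [Pi.add_apply, mul_add, Finset.sum_add_distrib]
  map_smul' s v := by
    funext g
    simp only [Pi.smul_apply, smul_eq_mul, RingHom.id_apply, Finset.mul_sum]
    exact Finset.sum_congr rfl (fun f _ => by ring)

/-- The tensor product `A 0 ⊗ A 1 ⊗ ⋯ ⊗ A (m-1)` of endomorphisms of `V̄`,
as an endomorphism of `V̄^⊗m`. -/
def tensorOp (r m : ℕ) (A : Fin m → Module.End Kq (Vb r)) : Module.End Kq (TP r m) :=
  matOp r m (fun g f => ∏ k : Fin m, (A k) (Pi.single (f k) 1) (g k))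
/-- `𝔼_i = Σ_j id^{⊗(j-1)} ⊗ e_i ⊗ (κ_i⁻¹)^{⊗(m-j)}` on `V̄^⊗m`. -/
def opEE (r m : ℕ) (a : Fin (2*r+3)) : Module.End Kq (TP r m) :=
  ∑ j : Fin m, tensorOp r m (fun k =>
    if (k : ℕ) < (j : ℕ) then 1 else if k = j then opE r a else opKinv r a)

/-- `𝔽_i = Σ_j κ_i^{⊗(j-1)} ⊗ f_i ⊗ id^{⊗(m-j)}` on `V̄^⊗m`. -/
def opFF (r m : ℕ) (a : Fin (2*r+3)) : Module.End Kq (TP r m) :=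
  ∑ j : Fin m, tensorOp r m (fun k =>
    if (k : ℕ) < (j : ℕ) then opK r a else if k = j then opF r a else 1)

/-- `𝕂_i = κ_i^{⊗m}`. -/
def opKK (r m : ℕ) (a : Fin (2*r+3)) : Module.End Kq (TP r m) :=
  tensorOp r m (fun _ => opK r a)

/-- `𝕂_i⁻¹ = (κ_i⁻¹)^{⊗m}`. -/
def opKKinv (r m : ℕ) (a : Fin (2*r+3)) : Module.End Kq (TP r m) :=
  tensorOp r m (fun _ => opKinv r a)

/-- `𝕜_i = 𝕂_i 𝕂_{-i}⁻¹` (the index `-i` corresponds to `Fin.rev a`). -/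
def opkk (r m : ℕ) (a : Fin (2*r+3)) : Module.End Kq (TP r m) :=
  opKK r m a * opKKinv r m a.rev

/-- `𝕜_i⁻¹ = 𝕂_{-i} 𝕂_i⁻¹`. -/
def opkkInv (r m : ℕ) (a : Fin (2*r+3)) : Module.End Kq (TP r m) :=
  opKK r m a.rev * opKKinv r m a

/-- The index `a` corresponding to `i = 0`. -/
def midI (r : ℕ) : Fin (2*r+3) := ⟨r+1, by omega⟩

/-- `ℬ_i = 𝔼_i + 𝔽_{-i} 𝕂_i⁻¹` for `i ≠ 0`. -/
def opB (r m : ℕ) (a : Fin (2*r+3)) : Module.End Kq (TP r m) :=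
  opEE r m a + opFF r m a.rev * opKKinv r m a

/-- `ℬ_0 = 𝔼_0 + q 𝔽_0 𝕂_0⁻¹ + 𝕂_0⁻¹`. -/
def opB0 (r m : ℕ) : Module.End Kq (TP r m) :=
  opEE r m (midI r) + qv • (opFF r m (midI r) * opKKinv r m (midI r)) + opKKinv r m (midI r)

/-- Generating set of the Levi-type ıquantum group image `Φ(L_q^ı)`:
`ℬ_0`, the `ℬ_i` with `0 ≠ i`, `-r ≤ i ≤ r`, and the `𝕜_i^{±1}` with `-r-1 ≤ i ≤ r+1`. -/
def LeviSet (r m : ℕ) : Set (Module.End Kq (TP r m)) :=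
  {opB0 r m} ∪ (opB r m '' {a | a ≠ midI r ∧ 0 < (a : ℕ) ∧ (a : ℕ) < 2*r+2}) ∪
    Set.range (opkk r m) ∪ Set.range (opkkInv r m)

/-- `Φ(L_q^ı)`, the image of the Levi-type ıquantum group in `End(V̄^⊗m)`. -/
def PhiL (r m : ℕ) : Subalgebra Kq (Module.End Kq (TP r m)) :=
  Algebra.adjoin Kq (LeviSet r m)

/-- The operator `Ψ(H_0)` on `V̄^⊗m`. -/
def R0op (r m : ℕ) : Module.End Kq (TP r m) :=
  if h : 0 < m then
    { toFun := fun v g =>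
        v (Function.update g ⟨0, h⟩ (Fin.rev (g ⟨0, h⟩))) +
          (if g ⟨0, h⟩ < Fin.rev (g ⟨0, h⟩) then (qv⁻¹ - qv) * v g else 0)
      map_add' := fun u v => by
        funext g
        simp only [Pi.add_apply]
        split_ifs <;> ring
      map_smul' := fun s v => by
        funext g
        simp only [Pi.smul_apply, smul_eq_mul, RingHom.id_apply]
        split_ifs <;> ring }
  else 1

/-- The operator `Ψ(H_{p+1})` on `V̄^⊗m`, interchanging tensor positions `p` and `p+1`
(0-based). -/
def Rsw (r m : ℕ) (p : ℕ) : Module.End Kq (TP r m) :=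
  if h : p + 1 < m then
    { toFun := fun v g =>
        if g ⟨p, by omega⟩ = g ⟨p+1, h⟩ then qv⁻¹ * v g
        else v (g ∘ Equiv.swap ⟨p, by omega⟩ ⟨p+1, h⟩) +
          (if g ⟨p+1, h⟩ < g ⟨p, by omega⟩ then (qv⁻¹ - qv) * v g else 0)
      map_add' := fun u v => by
        funext g
        simp only [Pi.add_apply, Function.comp_apply]
        split_ifs <;> ring
      map_smul' := fun s v => by
        funext g
        simp only [Pi.smul_apply, smul_eq_mul, RingHom.id_apply, Function.comp_apply]
        split_ifs <;> ring }
  else 1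

/-- The operator `Ψ(H_i)` on `V̄^⊗m`, for `0 ≤ i ≤ m-1`. -/
def RopN (r m : ℕ) (i : ℕ) : Module.End Kq (TP r m) :=
  if i = 0 then R0op r m else Rsw r m (i - 1)
/-- `j ∈ 𝕀(2r+2)`, i.e. `η_j ∈ V`. -/
def innerI (r : ℕ) (j : Idx r) : Prop := j ≠ botI r ∧ j ≠ topI r

/-- `f` indexes a basis vector of `V^{⊗l} ⊗ η_{r+3/2}^{⊗(m-l)}`. -/
def goodF (r m : ℕ) (l : ℕ) (f : Fin m → Idx r) : Prop :=
  ∀ k : Fin m, ((k : ℕ) < l → innerI r (f k)) ∧ (l ≤ (k : ℕ) → f k = topI r)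

/-- The subspace `V̄_{{1,…,l},∅} = V^{⊗l} ⊗ η_{r+3/2}^{⊗(m-l)}` of `V̄^⊗m`. -/
def Vsub (r m : ℕ) (l : ℕ) : Submodule Kq (TP r m) :=
  Submodule.span Kq {v | ∃ f, goodF r m l f ∧ v = Mf f}

/-- The subspace `V̄_{I,J}` of `V̄^⊗m`. -/
def VIJ (r m : ℕ) (I J : Finset (Fin m)) : Submodule Kq (TP r m) :=
  Submodule.span Kq {v | ∃ f : Fin m → Idx r,
    (∀ k : Fin m, (k ∈ I → innerI r (f k)) ∧ (k ∈ J → f k = botI r) ∧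
      (k ∉ I → k ∉ J → f k = topI r)) ∧ v = Mf f}

/-- The subspace `V̄_l = ⊕_{#I = l, J} V̄_{I,J}` of `V̄^⊗m`. -/
def Vlevel (r m : ℕ) (l : ℕ) : Submodule Kq (TP r m) :=
  Submodule.span Kq {v | ∃ f : Fin m → Idx r,
    Nat.card {k : Fin m // innerI r (f k)} = l ∧ v = Mf f}

/-- The length (number of inversions) of a permutation of `{0, …, l-1}`. -/
def lenPerm {l : ℕ} (σ : Equiv.Perm (Fin l)) : ℕ :=
  (Finset.univ.filter (fun p : Fin l × Fin l => p.1 < p.2 ∧ σ p.2 < σ p.1)).card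

/-- The simple transposition interchanging `p` and `p+1` (0-based) in `𝔖_l`;
this is the paper's `s_{p+1}`. -/
def adjSwap (l : ℕ) (p : ℕ) : Equiv.Perm (Fin l) :=
  if h : p + 1 < l then Equiv.swap ⟨p, by omega⟩ ⟨p+1, h⟩ else 1

/-- The first descent of a permutation, if any. -/
def descentIdx {l : ℕ} (σ : Equiv.Perm (Fin l)) : Option ℕ :=
  (List.range l).find? (fun p =>
    if h : p + 1 < l then decide (σ ⟨p+1, h⟩ < σ ⟨p, by omega⟩) else false)

/-- Canonical reduced word construction (with fuel). -/
def permWordAux {l : ℕ} : ℕ → Equiv.Perm (Fin l) → List ℕ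
  | 0, _ => []
  | (fuel+1), σ =>
    match descentIdx σ with
    | none => []
    | some p => permWordAux fuel (σ * adjSwap l p) ++ [p]

/-- A canonical reduced word for `σ`: `σ = s_{p₁+1} ⋯ s_{p_k+1}` (paper indexing)
where `permWord σ = [p₁, …, p_k]`, and `k = ℓ(σ)`. -/
def permWord {l : ℕ} (σ : Equiv.Perm (Fin l)) : List ℕ := permWordAux (lenPerm σ) σ

/-- The operator `Ψ(H_σ)` on `V̄^⊗m` for a permutation `σ ∈ 𝔖_l` (`l ≤ m`), where
`H_σ = H_{i₁} ⋯ H_{i_k}` for a reduced expression `σ = s_{i₁} ⋯ s_{i_k}`; since `Ψ` is an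
anti-homomorphism this is the product of the `Ψ(H_i)` in reversed order. -/
def opPerm (r m : ℕ) {l : ℕ} (σ : Equiv.Perm (Fin l)) : Module.End Kq (TP r m) :=
  (((permWord σ).map (fun p => RopN r m (p+1))).reverse).prod

/-- `A` is a finite product of the operators `Ψ(H_i)^{±1}`, `0 ≤ i ≤ m-1`. -/
def IsRWord (r m : ℕ) (A : Module.End Kq (TP r m)) : Prop :=
  ∃ ws : List (Module.End Kq (TP r m)), A = ws.prod ∧
    ∀ u ∈ ws, ∃ i : ℕ, i < m ∧
      (u = RopN r m i ∨ (u * RopN r m i = 1 ∧ RopN r m i * u = 1))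
/-- Generator `H_i` of the free algebra on `m` letters. -/
def Hvar (m : ℕ) (i : Fin m) : FreeAlgebra Kq (Fin m) := FreeAlgebra.ι Kq i

/-- The defining relations of the Iwahori–Hecke algebra `H(B_m)` of type `B_m`. -/
inductive HBrel (m : ℕ) : FreeAlgebra Kq (Fin m) → FreeAlgebra Kq (Fin m) → Prop
  | quad (i : Fin m) :
      HBrel m ((Hvar m i - algebraMap Kq _ qv⁻¹) * (Hvar m i + algebraMap Kq _ qv)) 0
  | braid (i : ℕ) (h1 : 1 ≤ i) (h2 : i + 1 < m) :
      HBrel m (Hvar m ⟨i, by omega⟩ * Hvar m ⟨i+1, h2⟩ * Hvar m ⟨i, by omega⟩)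
              (Hvar m ⟨i+1, h2⟩ * Hvar m ⟨i, by omega⟩ * Hvar m ⟨i+1, h2⟩)
  | comm (i j : Fin m) (h : (i : ℕ) + 1 < (j : ℕ) ∨ (j : ℕ) + 1 < (i : ℕ)) :
      HBrel m (Hvar m i * Hvar m j) (Hvar m j * Hvar m i)
  | braid0 (h : 1 < m) :
      HBrel m (Hvar m ⟨0, by omega⟩ * Hvar m ⟨1, h⟩ * Hvar m ⟨0, by omega⟩ * Hvar m ⟨1, h⟩)
              (Hvar m ⟨1, h⟩ * Hvar m ⟨0, by omega⟩ * Hvar m ⟨1, h⟩ * Hvar m ⟨0, by omega⟩)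

/-- The Iwahori–Hecke algebra `H(B_m)` of type `B_m` over `ℚ(q)`. -/
abbrev HeckeB (m : ℕ) := RingQuot (HBrel m)

/-- The generator `H_i ∈ H(B_m)`. -/
def Hgen (m : ℕ) (i : Fin m) : HeckeB m := RingQuot.mkAlgHom Kq (HBrel m) (Hvar m i)

/-- The generator `H_j ∈ H(B_m)` with out-of-range indices sent to `1`. -/
def HgenN (m : ℕ) (j : ℕ) : HeckeB m := if h : j < m then Hgen m ⟨j, h⟩ else 1

/-- The element `H_w ∈ H(B_m)` for `w ∈ 𝔖_m ⊂ 𝒲(B_m)`, defined via a reduced expression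
for `w` (well defined by Matsumoto's theorem). -/
def HpermB (m : ℕ) (w : Equiv.Perm (Fin m)) : HeckeB m :=
  ((permWord w).map (fun p => HgenN m (p+1))).prod

/-- Generators of the duplex Hecke algebra: the `T_i` and the `x_σ^{(l)}`. -/
def DGen (m : ℕ) : Type := (Fin m) ⊕ (Σ l : Fin (m+1), Equiv.Perm (Fin (l : ℕ)))

/-- The generator `T_i` of the free algebra. -/
def Tvar (m : ℕ) (i : Fin m) : FreeAlgebra Kq (DGen m) := FreeAlgebra.ι Kq (Sum.inl i)

/-- The generator `x_σ^{(l)}` of the free algebra. -/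
def Xvar (m : ℕ) (l : Fin (m+1)) (σ : Equiv.Perm (Fin (l : ℕ))) : FreeAlgebra Kq (DGen m) :=
  FreeAlgebra.ι Kq (Sum.inr ⟨l, σ⟩)

/-- The defining relations of the duplex Hecke algebra `𝓗_m` of type `B`. -/
inductive DHrel (m : ℕ) : FreeAlgebra Kq (DGen m) → FreeAlgebra Kq (DGen m) → Prop
  | quadT (i : Fin m) :
      DHrel m ((Tvar m i + algebraMap Kq _ qv) * (Tvar m i - algebraMap Kq _ qv⁻¹)) 0
  | braidT (i : ℕ) (h1 : 1 ≤ i) (h2 : i + 1 < m) :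
      DHrel m (Tvar m ⟨i, by omega⟩ * Tvar m ⟨i+1, h2⟩ * Tvar m ⟨i, by omega⟩)
              (Tvar m ⟨i+1, h2⟩ * Tvar m ⟨i, by omega⟩ * Tvar m ⟨i+1, h2⟩)
  | commT (i j : Fin m) (h : (i : ℕ) + 1 < (j : ℕ) ∨ (j : ℕ) + 1 < (i : ℕ)) :
      DHrel m (Tvar m i * Tvar m j) (Tvar m j * Tvar m i)
  | braid0T (h : 1 < m) :
      DHrel m (Tvar m ⟨0, by omega⟩ * Tvar m ⟨1, h⟩ * Tvar m ⟨0, by omega⟩ * Tvar m ⟨1, h⟩)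
              (Tvar m ⟨1, h⟩ * Tvar m ⟨0, by omega⟩ * Tvar m ⟨1, h⟩ * Tvar m ⟨0, by omega⟩)
  | xRightUp (l : Fin (m+1)) (σ : Equiv.Perm (Fin (l : ℕ))) (p : ℕ) (hp : p + 1 < (l : ℕ))
      (hlen : lenPerm (σ * adjSwap (l : ℕ) p) = lenPerm σ + 1) :
      DHrel m (Xvar m l σ * Xvar m l (adjSwap (l : ℕ) p)) (Xvar m l (σ * adjSwap (l : ℕ) p))
  | xRightDown (l : Fin (m+1)) (σ : Equiv.Perm (Fin (l : ℕ))) (p : ℕ) (hp : p + 1 < (l : ℕ))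
      (hlen : lenPerm (σ * adjSwap (l : ℕ) p) + 1 = lenPerm σ) :
      DHrel m (Xvar m l σ * Xvar m l (adjSwap (l : ℕ) p))
              (Xvar m l (σ * adjSwap (l : ℕ) p) + algebraMap Kq _ (qv⁻¹ - qv) * Xvar m l σ)
  | xLeftUp (l : Fin (m+1)) (σ : Equiv.Perm (Fin (l : ℕ))) (p : ℕ) (hp : p + 1 < (l : ℕ))
      (hlen : lenPerm (adjSwap (l : ℕ) p * σ) = lenPerm σ + 1) :
      DHrel m (Xvar m l (adjSwap (l : ℕ) p) * Xvar m l σ) (Xvar m l (adjSwap (l : ℕ) p * σ))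
  | xLeftDown (l : Fin (m+1)) (σ : Equiv.Perm (Fin (l : ℕ))) (p : ℕ) (hp : p + 1 < (l : ℕ))
      (hlen : lenPerm (adjSwap (l : ℕ) p * σ) + 1 = lenPerm σ) :
      DHrel m (Xvar m l (adjSwap (l : ℕ) p) * Xvar m l σ)
              (Xvar m l (adjSwap (l : ℕ) p * σ) + algebraMap Kq _ (qv⁻¹ - qv) * Xvar m l σ)
  | xOrtho (l k : Fin (m+1)) (h : l ≠ k) (σ : Equiv.Perm (Fin (l : ℕ)))
      (γ : Equiv.Perm (Fin (k : ℕ))) :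
      DHrel m (Xvar m l σ * Xvar m k γ) 0
  | TxMid (i : ℕ) (l : Fin (m+1)) (h0 : 0 < i) (hil : i < (l : ℕ))
      (σ : Equiv.Perm (Fin (l : ℕ))) :
      DHrel m (Tvar m ⟨i, by have := l.2; omega⟩ * Xvar m l σ)
              (Xvar m l (adjSwap (l : ℕ) (i-1)) * Xvar m l σ)
  | xTMid (i : ℕ) (l : Fin (m+1)) (h0 : 0 < i) (hil : i < (l : ℕ))
      (σ : Equiv.Perm (Fin (l : ℕ))) :
      DHrel m (Xvar m l σ * Tvar m ⟨i, by have := l.2; omega⟩)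
              (Xvar m l σ * Xvar m l (adjSwap (l : ℕ) (i-1)))
  | TxBig (i : Fin m) (l : Fin (m+1)) (h : (l : ℕ) < (i : ℕ)) (σ : Equiv.Perm (Fin (l : ℕ))) :
      DHrel m (Tvar m i * Xvar m l σ) (algebraMap Kq _ qv⁻¹ * Xvar m l σ)
  | xTBig (i : Fin m) (l : Fin (m+1)) (h : (l : ℕ) < (i : ℕ)) (σ : Equiv.Perm (Fin (l : ℕ))) :
      DHrel m (Xvar m l σ * Tvar m i) (algebraMap Kq _ qv⁻¹ * Xvar m l σ)

/-- The duplex Hecke algebra `𝓗_m` of type `B` over `ℚ(q)`. -/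
abbrev DuplexH (m : ℕ) := RingQuot (DHrel m)

/-- The generator `T_i ∈ 𝓗_m`. -/
def Tg (m : ℕ) (i : Fin m) : DuplexH m := RingQuot.mkAlgHom Kq (DHrel m) (Tvar m i)

/-- The generator `x_σ^{(l)} ∈ 𝓗_m`. -/
def Xg (m : ℕ) (l : Fin (m+1)) (σ : Equiv.Perm (Fin (l : ℕ))) : DuplexH m :=
  RingQuot.mkAlgHom Kq (DHrel m) (Xvar m l σ)

/-! ### Anisotropy of the standard form over `ℚ(q)` -/

/-- `ℚ(q)` is formally real. After clearing denominators, evaluating at each rational point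
reduces this to sums of squares in `ℚ`. -/
theorem eq_zero_of_sum_sq_eq_zero {ι : Type*} [Fintype ι] (v : ι → Kq)
    (h : ∑ i, v i * v i = 0) : v = 0 := by
  obtain ⟨b, hb⟩ := IsLocalization.exist_integer_multiples_of_finite
    (nonZeroDivisors (Polynomial ℚ)) v
  choose p hp using hb
  have hb0 : algebraMap (Polynomial ℚ) Kq b ≠ 0 := by
    simp
  have hinj : Function.Injective (algebraMap (Polynomial ℚ) Kq) :=
    IsFractionRing.injective (Polynomial ℚ) Kq
  have hsum : ∑ i, p i * p i = 0 := by
    apply hinj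
    simp only [map_sum, map_mul, map_zero, hp, Algebra.smul_def]
    calc _ = algebraMap (Polynomial ℚ) Kq b * algebraMap (Polynomial ℚ) Kq b *
          ∑ i, v i * v i := by
            rw [Finset.mul_sum]; exact Finset.sum_congr rfl fun i _ => by ring
      _ = 0 := by rw [h, mul_zero]
  funext i
  have hpi : p i = 0 := by
    apply Polynomial.funext
    intro x
    have hx := congrArg (Polynomial.eval x) hsum
    simp only [Polynomial.eval_finsetSum, Polynomial.eval_mul, Polynomial.eval_zero] at hx
    have := (Finset.sum_eq_zero_iff_of_nonneg (fun j _ => mul_self_nonneg _)).1 hx i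
      (Finset.mem_univ i)
    simpa using this
  have := hp i
  rw [hpi, map_zero, Algebra.smul_def] at this
  exact (mul_eq_zero.1 this.symm).resolve_left hb0

/-- The symmetric bilinear form on `V̄^⊗m` for which the basis `M_f` is orthonormal. -/
def stdForm (r m : ℕ) : LinearMap.BilinForm Kq (TP r m) := dotProductBilin Kq Kq

theorem stdForm_apply (r m : ℕ) (u w : TP r m) : stdForm r m u w = ∑ f, u f * w f := rfl

theorem isCompl_stdForm_orthogonal (r m : ℕ) (U : Submodule Kq (TP r m)) :
    IsCompl U ((stdForm r m).orthogonal U) := by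
  have hrefl : (stdForm r m).IsRefl := by
    intro u w h
    rw [stdForm_apply] at h ⊢
    simpa only [mul_comm] using h
  refine ((stdForm r m).restrict_nondegenerate_iff_isCompl_orthogonal hrefl).1 ?_
  refine ⟨fun u hu => ?_, fun u hu => ?_⟩ <;>
  exact Subtype.ext (eq_zero_of_sum_sq_eq_zero (u : TP r m) (hu u))

/-! ### Symmetry of the generating operators -/

/-- `A` is self-adjoint for `stdForm`. -/
def IsSelfAdj {r m : ℕ} (A : Module.End Kq (TP r m)) : Prop :=
  ∀ u w, stdForm r m (A u) w = stdForm r m u (A w)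

theorem isSelfAdj_one (r m : ℕ) : IsSelfAdj (1 : Module.End Kq (TP r m)) := fun _ _ => rfl

/-- An involutive permutation of the basis plus a diagonal operator is symmetric. -/
theorem isSelfAdj_of_involutive {r m : ℕ} {A : Module.End Kq (TP r m)}
    (e : (Fin m → Idx r) → (Fin m → Idx r)) (he : Function.Involutive e)
    (c : (Fin m → Idx r) → Kq) (hA : ∀ v g, A v g = v (e g) + c g * v g) : IsSelfAdj A := by
  intro u w
  simp only [stdForm_apply, hA, add_mul, mul_add, Finset.sum_add_distrib]
  congr 1
  · rw [← Equiv.sum_comp he.toPerm]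
    exact Finset.sum_congr rfl fun g _ => by simp [he g]
  · exact Finset.sum_congr rfl fun g _ => by ring

theorem isSelfAdj_R0op (r m : ℕ) : IsSelfAdj (R0op r m) := by
  unfold R0op
  split_ifs with h
  · refine isSelfAdj_of_involutive
      (fun g => Function.update g ⟨0, h⟩ (Fin.rev (g ⟨0, h⟩))) (fun g => by simp)
      (fun g => if g ⟨0, h⟩ < Fin.rev (g ⟨0, h⟩) then qv⁻¹ - qv else 0) (fun v g => ?_)
    simp [ite_mul]
  · exact isSelfAdj_one r m

theorem isSelfAdj_Rsw (r m p : ℕ) : IsSelfAdj (Rsw r m p) := by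
  unfold Rsw
  split_ifs with h
  · -- Where `g p = g (p+1)` the swap fixes `g`, so `q⁻¹` is the swap plus the scalar `q⁻¹ - 1`.
    refine isSelfAdj_of_involutive
      (fun g => g ∘ Equiv.swap (⟨p, Nat.lt_of_succ_lt h⟩ : Fin m) ⟨p+1, h⟩)
      (fun g => by funext k; simp)
      (fun g => if g ⟨p, by omega⟩ = g ⟨p+1, h⟩ then qv⁻¹ - 1 else
        if g ⟨p+1, h⟩ < g ⟨p, by omega⟩ then qv⁻¹ - qv else 0) (fun v g => ?_)
    simp only [LinearMap.coe_mk, AddHom.coe_mk]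
    split_ifs with h1 h2
    · have : g ∘ Equiv.swap ⟨p, by omega⟩ ⟨p+1, h⟩ = g := by
        funext k
        simp only [Function.comp_apply, Equiv.swap_apply_def]
        split_ifs with h3 h4
        · rw [h3, h1]
        · rw [h4, h1]
        · rfl
      rw [this]; ring
    · rfl
    · rw [zero_mul]
  · exact isSelfAdj_one r m

theorem isSelfAdj_RopN (r m i : ℕ) : IsSelfAdj (RopN r m i) := by
  unfold RopN
  split_ifs
  · exact isSelfAdj_R0op r m
  · exact isSelfAdj_Rsw r m _

open Classical in
/-- The coordinate projection onto `V^⊗l ⊗ η_{r+3/2}^⊗(m-l)` along the other basis vectors. -/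
def projL (r m l : ℕ) : Module.End Kq (TP r m) :=
  LinearMap.pi fun g => if goodF r m l g then LinearMap.proj g else 0

open Classical in
theorem projL_apply (r m l : ℕ) (v : TP r m) (g : Fin m → Idx r) :
    projL r m l v g = if goodF r m l g then v g else 0 := by
  unfold projL
  rw [LinearMap.pi_apply]
  split_ifs <;> rfl

theorem isSelfAdj_projL (r m l : ℕ) : IsSelfAdj (projL r m l) := by
  classical
  intro u w
  simp only [stdForm_apply, projL_apply]
  exact Finset.sum_congr rfl fun g _ => by split_ifs <;> simp

theorem projL_Mf (r m l : ℕ) (f : Fin m → Idx r) [Decidable (goodF r m l f)] :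
    projL r m l (Mf f) = if goodF r m l f then Mf f else 0 := by
  classical
  funext g
  rw [projL_apply]
  unfold Mf
  by_cases hg : g = f
  · subst hg; split_ifs <;> simp
  · split_ifs <;> simp [hg]

/-! ### Stable subspaces and the generators of the duplex Hecke algebra -/

theorem opPerm_one (r m l : ℕ) : opPerm r m (1 : Equiv.Perm (Fin l)) = 1 := by
  have h : lenPerm (1 : Equiv.Perm (Fin l)) = 0 := by
    unfold lenPerm
    rw [Finset.card_eq_zero, Finset.filter_eq_empty_iff]
    rintro ⟨a, b⟩ - ⟨h1, h2⟩
    exact lt_asymm h1 h2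
  simp [opPerm, permWord, h, permWordAux]

/-- The hypotheses on `Ξ(x_σ^(l))` say that it is `Ψ(H_σ)` precomposed with `projL`. -/
theorem Xi_Xg_eq {r m l : ℕ} {σ : Equiv.Perm (Fin l)} {A : Module.End Kq (TP r m)}
    (h1 : ∀ v ∈ Vsub r m l, A v = opPerm r m σ v)
    (h0 : ∀ f : Fin m → Idx r, ¬ goodF r m l f → A (Mf f) = 0) :
    A = opPerm r m σ * projL r m l := by
  classical
  refine (Pi.basisFun Kq (Fin m → Idx r)).ext fun f => ?_
  rw [Pi.basisFun_apply]
  change A (Mf f) = opPerm r m σ (projL r m l (Mf f))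
  rw [projL_Mf]
  split_ifs with hf
  · exact h1 _ (Submodule.subset_span ⟨f, hf, rfl⟩)
  · rw [h0 f hf, map_zero]

/-- Factors `Ψ(H_i)` of `Ψ(H_σ)` with an out-of-range index are the identity, so stability under
`Ψ(H_i)` for `i < m` suffices. -/
theorem opPerm_mem {r m l : ℕ} (σ : Equiv.Perm (Fin l)) {W : Submodule Kq (TP r m)}
    (hT : ∀ i : Fin m, ∀ v ∈ W, RopN r m (i : ℕ) v ∈ W) {v : TP r m} (hv : v ∈ W) :
    opPerm r m σ v ∈ W := by
  have hstep : ∀ (p : ℕ), ∀ v ∈ W, RopN r m (p + 1) v ∈ W := by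
    intro p v hv
    by_cases hp : p + 1 < m
    · exact hT ⟨p + 1, hp⟩ v hv
    · simpa [RopN, Rsw, hp] using hv
  unfold opPerm
  rw [← List.map_reverse]
  induction (permWord σ).reverse with
  | nil => simpa using hv
  | cons p L ih =>
    rw [List.map_cons, List.prod_cons]
    exact hstep p _ ih

theorem stable_of_generators {r m : ℕ}
    (Xi : DuplexH m →ₐ[Kq] (Module.End Kq (TP r m))ᵐᵒᵖ) (W : Submodule Kq (TP r m))
    (hT : ∀ i : Fin m, ∀ v ∈ W, (Xi (Tg m i)).unop v ∈ W)
    (hX : ∀ (l : Fin (m+1)) (σ : Equiv.Perm (Fin (l : ℕ))), ∀ v ∈ W,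
      (Xi (Xg m l σ)).unop v ∈ W) (h : DuplexH m) :
    ∀ v ∈ W, (Xi h).unop v ∈ W := by
  obtain ⟨a, rfl⟩ := RingQuot.mkAlgHom_surjective Kq (DHrel m) h
  induction a using FreeAlgebra.induction with
  | grade0 c =>
    intro v hv
    rw [AlgHom.commutes, AlgHom.commutes]
    exact W.smul_mem c hv
  | grade1 x =>
    rcases x with i | ⟨l, σ⟩
    · exact hT i
    · exact hX l σ
  | mul a b iha ihb =>
    intro v hv
    rw [map_mul, map_mul, MulOpposite.unop_mul]
    exact ihb _ (iha v hv)
  | add a b iha ihb =>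
    intro v hv
    rw [map_add, map_add, MulOpposite.unop_add]
    exact W.add_mem (iha v hv) (ihb v hv)

theorem stdForm_orthogonal_stable {r m : ℕ} {A : Module.End Kq (TP r m)} (hA : IsSelfAdj A)
    {U : Submodule Kq (TP r m)} (hU : ∀ v ∈ U, A v ∈ U) :
    ∀ w ∈ (stdForm r m).orthogonal U, A w ∈ (stdForm r m).orthogonal U := by
  intro w hw u hu
  rw [← hA]
  exact hw _ (hU u hu)

/-- If every stable subspace has a stable complement, the space is a direct sum of
simple stable subspaces: this is the semisimple decomposition over the image algebra, transported
to `K`-subspaces. -/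
theorem exists_simple_decomposition {r m : ℕ}
    (Xi : DuplexH m →ₐ[Kq] (Module.End Kq (TP r m))ᵐᵒᵖ)
    (hcompl : ∀ U : Submodule Kq (TP r m), (∀ h, ∀ v ∈ U, (Xi h).unop v ∈ U) →
      ∃ W : Submodule Kq (TP r m), (∀ h, ∀ v ∈ W, (Xi h).unop v ∈ W) ∧ IsCompl U W) :
    ∃ (ι : Type) (D : ι → Submodule Kq (TP r m)),
      (⨆ i, D i = ⊤) ∧
      (∀ i : ι, Disjoint (D i) (⨆ (j : ι) (_ : j ≠ i), D j)) ∧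
      (∀ i : ι, D i ≠ ⊥) ∧
      (∀ (i : ι) (h : DuplexH m) (v : TP r m), v ∈ D i → (Xi h).unop v ∈ D i) ∧
      (∀ (i : ι) (U : Submodule Kq (TP r m)), U ≤ D i →
        (∀ (h : DuplexH m) (v : TP r m), v ∈ U → (Xi h).unop v ∈ U) → U = ⊥ ∨ U = D i) := by
  let S : Subalgebra Kq (Module.End Kq (TP r m)) := Xi.range.unop
  let φ : CompleteLatticeHom (Submodule S (TP r m)) (Submodule Kq (TP r m)) :=
    Submodule.restrictScalarsLatticeHom Kq S (TP r m)
  have hφinj : Function.Injective φ := Submodule.restrictScalars_injective Kq S (TP r m)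
  have hstab : ∀ (N : Submodule S (TP r m)) (h : DuplexH m), ∀ v ∈ φ N,
      (Xi h).unop v ∈ φ N := fun N h v hv =>
    N.smul_mem (⟨(Xi h).unop, ⟨h, rfl⟩⟩ : S) hv
  have hlift : ∀ U : Submodule Kq (TP r m), (∀ h, ∀ v ∈ U, (Xi h).unop v ∈ U) →
      ∃ N : Submodule S (TP r m), φ N = U := fun U hU =>
    ⟨{ U with
        smul_mem' := by
          rintro ⟨A, h, hA⟩ v hv
          have hA' : (Xi h).unop = A := congrArg MulOpposite.unop hA
          subst hA'
          exact hU h v hv }, rfl⟩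
  have hdis : ∀ {N N' : Submodule S (TP r m)}, Disjoint N N' ↔ Disjoint (φ N) (φ N') := by
    intro N N'
    rw [disjoint_iff, disjoint_iff, ← map_inf, ← map_bot φ, hφinj.eq_iff]
  have hss : IsSemisimpleModule S (TP r m) := by
    refine { exists_isCompl := fun N => ?_ }
    obtain ⟨W, hW, hc⟩ := hcompl (φ N) (hstab N)
    obtain ⟨N', rfl⟩ := hlift W hW
    refine ⟨N', hdis.2 hc.disjoint, codisjoint_iff.2 (hφinj ?_)⟩
    rw [map_sup, map_top, hc.sup_eq_top]
  obtain ⟨s, hind, htop, hsimple⟩ :=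
    IsSemisimpleModule.exists_sSupIndep_sSup_simples_eq_top S (TP r m)
  rw [sSupIndep_iff] at hind
  have hatom : ∀ i : s, IsAtom (i : Submodule S (TP r m)) := fun i =>
    isSimpleModule_iff_isAtom.1 (hsimple i i.2)
  refine ⟨s, fun i => φ i, ?_, fun i => ?_, fun i hi => ?_, fun i => hstab i, fun i U hUi hU => ?_⟩
  · rw [← map_iSup, ← sSup_eq_iSup', htop, map_top]
  · have := hdis.1 (hind i)
    simpa only [map_iSup] using this
  · exact (hatom i).1 (hφinj (hi.trans (map_bot φ).symm))
  · obtain ⟨N, rfl⟩ := hlift U hU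
    rcases (hatom i).le_iff.1 (show N ≤ i from hUi) with h | h
    · exact Or.inl (by rw [h, map_bot])
    · exact Or.inr (by rw [h])

/-- **Corollary 3.6.** `V̄^⊗m` is a completely reducible `𝓗_m`-module under `Ξ`: it is the
direct sum of a family of subspaces, each of which is nonzero, `Ξ(𝓗_m)`-stable, and has no
`Ξ(𝓗_m)`-stable subspace other than `0` and itself. -/
theorem tensor_space_completely_reducible (r m : ℕ) (hr : 1 ≤ r) (hm : 2 ≤ m)
    (Xi : DuplexH m →ₐ[Kq] (Module.End Kq (TP r m))ᵐᵒᵖ)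
    (hXiT : ∀ i : Fin m, (Xi (Tg m i)).unop = RopN r m (i : ℕ))
    (hXix : ∀ (l : Fin (m+1)) (σ : Equiv.Perm (Fin (l : ℕ))),
      ∀ v ∈ Vsub r m (l : ℕ), (Xi (Xg m l σ)).unop v = opPerm r m σ v)
    (hXix0 : ∀ (l : Fin (m+1)) (σ : Equiv.Perm (Fin (l : ℕ))) (f : Fin m → Idx r),
      ¬ goodF r m (l : ℕ) f → (Xi (Xg m l σ)).unop (Mf f) = 0) :
    ∃ (ι : Type) (D : ι → Submodule Kq (TP r m)),
      (⨆ i, D i = ⊤) ∧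
      (∀ i : ι, Disjoint (D i) (⨆ (j : ι) (_ : j ≠ i), D j)) ∧
      (∀ i : ι, D i ≠ ⊥) ∧
      (∀ (i : ι) (h : DuplexH m) (v : TP r m), v ∈ D i → (Xi h).unop v ∈ D i) ∧
      (∀ (i : ι) (U : Submodule Kq (TP r m)), U ≤ D i →
        (∀ (h : DuplexH m) (v : TP r m), v ∈ U → (Xi h).unop v ∈ U) → U = ⊥ ∨ U = D i) := by
  have hX : ∀ (l : Fin (m+1)) (σ : Equiv.Perm (Fin (l : ℕ))),
      (Xi (Xg m l σ)).unop = opPerm r m σ * projL r m l := fun l σ =>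
    Xi_Xg_eq (hXix l σ) (hXix0 l σ)
  have hP : ∀ l : Fin (m+1), (Xi (Xg m l 1)).unop = projL r m l := fun l => by
    rw [hX, opPerm_one, one_mul]
  refine exists_simple_decomposition Xi fun U hU =>
    ⟨(stdForm r m).orthogonal U, ?_, isCompl_stdForm_orthogonal r m U⟩
  have hT : ∀ i : Fin m, ∀ v ∈ (stdForm r m).orthogonal U,
      RopN r m (i : ℕ) v ∈ (stdForm r m).orthogonal U := fun i =>
    stdForm_orthogonal_stable (isSelfAdj_RopN r m i) fun v hv => hXiT i ▸ hU (Tg m i) v hv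
  refine stable_of_generators Xi _ (fun i => (hXiT i).symm ▸ hT i) fun l σ v hv => ?_
  rw [hX]
  exact opPerm_mem σ hT (stdForm_orthogonal_stable (isSelfAdj_projL r m l)
    (fun u hu => hP l ▸ hU (Xg m l 1) u hu) v hv)
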